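/- Let d ≥ 2, let p be a symmetric probability mass function on ℤ, and suppose ψ(s) := Σ_{j∈ℤ} e^{sj} p(j) < ∞ for all s ∈ (−R, R), where R > 0. Let H be the almost-sure limit of the spherical averages H_r of the free height field with increment law p on the rooted Cayley tree of order d (this limit exists). Then for every real t with |t| < (d+1)R one has E[exp(tH)] < ∞, E[exp(tH)] = lim_{r→∞} E[exp(t H_r)], and log E[exp(tH)] = Σ_{l=0}^{∞} (d+1) d^l · log ψ( t / ((d+1)d^l) ), the series converging absolutely. -/

import Mathlib

open MeasureTheory ProbabilityTheory Filter Finset Topology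

noncomputable section

/-- A non-root vertex of the rooted Cayley tree of order `d`: the first step from the
root is one of `d+1` children, every further step one of `d` children. -/
abbrev Vertex (d : ℕ) : Type := Fin (d + 1) × List (Fin d)

/-- depth of a non-root vertex -/
def vdepth {d : ℕ} (v : Vertex d) : ℕ := v.2.length + 1

/-- the sphere `W_r` of radius `r ≥ 1`: all vertices of depth `r` -/
def sphereW (d r : ℕ) : Finset (Vertex d) :=
  (Finset.univ : Finset (Fin (d + 1) × (Fin (r - 1) → Fin d))).image
    (fun x => (x.1, List.ofFn x.2))

/-- height at `v`: sum of the increments along the path from the root to `v`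
(the prefixes of length `0,…,|v.2|` of the step list of `v` enumerate that path). -/
def heightAt {d : ℕ} {Ω : Type*} (Y : Vertex d → Ω → ℝ) (v : Vertex d) (ω : Ω) : ℝ :=
  ∑ k ∈ Finset.range (v.2.length + 1), Y (v.1, v.2.take k) ω

/-- spherical average `H_r` of the heights at depth `r` -/
def sphAvg (d : ℕ) {Ω : Type*} (Y : Vertex d → Ω → ℝ) (r : ℕ) (ω : Ω) : ℝ :=
  (((d + 1) * d ^ (r - 1) : ℕ) : ℝ)⁻¹ * ∑ v ∈ sphereW d r, heightAt Y v ω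

lemma tendsto_integral_exp_of_bounded {Ω : Type*} [MeasurableSpace Ω] (P : Measure Ω)
    [IsFiniteMeasure P] {U : ℕ → Ω → ℝ} {V : Ω → ℝ} {q C : ℝ} (hq : 1 < q)
    (hU : ∀ n, Measurable (U n))
    (hint : ∀ n, Integrable (fun ω => Real.exp (q * U n ω)) P)
    (hC : ∀ n, ∫ ω, Real.exp (q * U n ω) ∂P ≤ C)
    (hUV : ∀ᵐ ω ∂P, Tendsto (fun n => U n ω) atTop (𝓝 (V ω))) :
    Integrable (fun ω => Real.exp (V ω)) P ∧
      Tendsto (fun n => ∫ ω, Real.exp (U n ω) ∂P) atTop (𝓝 (∫ ω, Real.exp (V ω) ∂P)) := by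
  have hmeas : ∀ n, AEStronglyMeasurable (fun ω => Real.exp (U n ω)) P := fun n =>
    (hU n).exp.aestronglyMeasurable
  have hlim : ∀ᵐ ω ∂P, Tendsto (fun n => Real.exp (U n ω)) atTop (𝓝 (Real.exp (V ω))) := by
    filter_upwards [hUV] with ω h using (Real.continuous_exp.tendsto _).comp h
  have hui : UniformIntegrable (fun n ω => Real.exp (U n ω)) 1 P := by
    refine uniformIntegrable_of le_rfl ENNReal.one_ne_top hmeas fun ε hε => ?_
    have htend : Tendsto (fun K : ℝ => Real.exp (-((q - 1) * K)) * C) atTop (𝓝 0) := by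
      have := (Real.tendsto_exp_neg_atTop_nhds_zero.comp
        (tendsto_id.const_mul_atTop (sub_pos.2 hq))).mul_const C
      simpa [Function.comp_def] using this
    obtain ⟨K, hK⟩ := (htend.eventually (gt_mem_nhds hε)).exists
    refine ⟨(Real.exp K).toNNReal, fun n => ?_⟩
    rw [eLpNorm_one_eq_lintegral_enorm]
    calc _ ≤ ∫⁻ ω, ENNReal.ofReal (Real.exp (-((q - 1) * K)) * Real.exp (q * U n ω)) ∂P := by
          refine lintegral_mono fun ω => ?_
          by_cases h : Real.exp K ≤ Real.exp (U n ω)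
          · rw [Set.indicator_of_mem (by
              rw [Set.mem_ofPred_eq, Real.toNNReal_le_iff_le_coe]; simpa using h)]
            rw [Real.enorm_eq_ofReal (Real.exp_pos _).le]
            refine ENNReal.ofReal_le_ofReal ?_
            rw [← Real.exp_add, Real.exp_le_exp]
            nlinarith [Real.exp_le_exp.1 h]
          · rw [Set.indicator_of_notMem (by
              rw [Set.mem_ofPred_eq, Real.toNNReal_le_iff_le_coe]; simpa using h)]
            simp
      _ = ENNReal.ofReal (Real.exp (-((q - 1) * K)) * ∫ ω, Real.exp (q * U n ω) ∂P) := by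
          rw [← integral_const_mul, ofReal_integral_eq_lintegral_ofReal ((hint n).const_mul _)
            (Eventually.of_forall fun ω => by positivity)]
      _ ≤ ENNReal.ofReal ε := by
          refine ENNReal.ofReal_le_ofReal (le_trans ?_ hK.le)
          have := hC n
          gcongr
  have hV : Integrable (fun ω => Real.exp (V ω)) P := hui.integrable_of_ae_tendsto hlim
  refine ⟨hV, tendsto_integral_of_L1' _ hV.1 ?_ ?_⟩
  · exact Eventually.of_forall fun n => memLp_one_iff_integrable.1 (hui.memLp n)
  · exact tendsto_Lp_finite_of_tendsto_ae le_rfl ENNReal.one_ne_top hmeas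
      (memLp_one_iff_integrable.2 hV) hui.unifIntegrable hlim

lemma cosh_mul_sub_one_le {a : ℝ} (ha : |a| ≤ 1) (x : ℝ) :
    Real.cosh (a * x) - 1 ≤ a ^ 2 * (Real.cosh x - 1) := by
  have h1 := (hasSum_nat_add_iff' 1).2 (Real.hasSum_cosh (a * x))
  have h2 := ((hasSum_nat_add_iff' 1).2 (Real.hasSum_cosh x)).mul_left (a ^ 2)
  simp only [range_one, sum_singleton, mul_zero, pow_zero, Nat.factorial_zero, Nat.cast_one,
    div_one] at h1 h2
  refine hasSum_le (fun n => ?_) h1 h2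
  rw [mul_pow, mul_div_assoc, pow_mul a]
  have ha2 : a ^ 2 ≤ 1 := (sq_le_one_iff_abs_le_one a).2 ha
  have h3 : (a ^ 2) ^ (n + 1) ≤ a ^ 2 := by
    rw [pow_succ]
    exact mul_le_of_le_one_left (sq_nonneg a) (pow_le_one₀ (sq_nonneg a) ha2)
  have : 0 ≤ x ^ (2 * (n + 1)) := by rw [pow_mul]; positivity
  gcongr

/-- The exponential generating function `ψ(s) = ∑ⱼ e^{sj} p(j)` of a weight `p` on `ℤ`. -/
def expSeries (p : ℤ → ℝ) (s : ℝ) : ℝ := ∑' j : ℤ, Real.exp (s * j) * p j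

lemma hasSum_cosh_expSeries {p : ℤ → ℝ} (hsymm : ∀ j, p (-j) = p j) {s : ℝ}
    (hs : Summable fun j : ℤ => Real.exp (s * j) * p j) :
    HasSum (fun j : ℤ => Real.cosh (s * j) * p j) (expSeries p s) := by
  have h1 : HasSum (fun j : ℤ => Real.exp (s * j) * p j) (expSeries p s) := hs.hasSum
  have h2 : HasSum (fun j : ℤ => Real.exp (-(s * j)) * p j) (expSeries p s) := by
    have := (Equiv.neg ℤ).hasSum_iff.2 h1
    simpa [Function.comp_def, hsymm] using this
  have h3 := (h1.add h2).div_const 2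
  rw [add_self_div_two] at h3
  refine h3.congr_fun ?_
  intro j
  rw [Real.cosh_eq]
  ring

lemma hasSum_cosh_sub_one {p : ℤ → ℝ} (hpsum : Summable p) (hp1 : ∑' j, p j = 1)
    (hsymm : ∀ j, p (-j) = p j) {s : ℝ}
    (hs : Summable fun j : ℤ => Real.exp (s * j) * p j) :
    HasSum (fun j : ℤ => (Real.cosh (s * j) - 1) * p j) (expSeries p s - 1) := by
  simpa [sub_mul] using (hasSum_cosh_expSeries hsymm hs).sub (hp1 ▸ hpsum.hasSum)

lemma one_le_expSeries {p : ℤ → ℝ} (hp0 : ∀ j, 0 ≤ p j) (hpsum : Summable p)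
    (hp1 : ∑' j, p j = 1) (hsymm : ∀ j, p (-j) = p j) {s : ℝ}
    (hs : Summable fun j : ℤ => Real.exp (s * j) * p j) : 1 ≤ expSeries p s :=
  sub_nonneg.1 <| (hasSum_cosh_sub_one hpsum hp1 hsymm hs).nonneg fun j =>
    mul_nonneg (sub_nonneg.2 (Real.one_le_cosh _)) (hp0 j)

lemma expSeries_mul_sub_one_le {p : ℤ → ℝ} (hp0 : ∀ j, 0 ≤ p j) (hpsum : Summable p)
    (hp1 : ∑' j, p j = 1) (hsymm : ∀ j, p (-j) = p j) {a s : ℝ} (ha : |a| ≤ 1)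
    (hs : Summable fun j : ℤ => Real.exp (s * j) * p j)
    (has : Summable fun j : ℤ => Real.exp (a * s * j) * p j) :
    expSeries p (a * s) - 1 ≤ a ^ 2 * (expSeries p s - 1) := by
  refine hasSum_le (fun j => ?_) (hasSum_cosh_sub_one hpsum hp1 hsymm has)
    ((hasSum_cosh_sub_one hpsum hp1 hsymm hs).mul_left (a ^ 2))
  rw [mul_assoc a, ← mul_assoc (a ^ 2)]
  exact mul_le_mul_of_nonneg_right (cosh_mul_sub_one_le ha _) (hp0 j)

lemma abs_div_lt_of_abs_lt {d : ℕ} (hd : 1 ≤ d) {R t : ℝ} (ht : |t| < ((d : ℝ) + 1) * R) (l : ℕ) :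
    |t / (((d : ℝ) + 1) * (d : ℝ) ^ l)| < R := by
  have h1 : (1 : ℝ) ≤ (d : ℝ) ^ l := one_le_pow₀ (by exact_mod_cast hd)
  have h2 : (0 : ℝ) < (d : ℝ) + 1 := by positivity
  have hR : 0 < R := pos_of_mul_pos_right ((abs_nonneg t).trans_lt ht) h2.le
  rw [abs_div, abs_of_pos (by positivity : (0 : ℝ) < ((d : ℝ) + 1) * (d : ℝ) ^ l),
    div_lt_iff₀ (by positivity)]
  nlinarith [mul_le_mul_of_nonneg_left h1 (mul_pos h2 hR).le]

lemma summable_log_expSeries {d : ℕ} (hd : 2 ≤ d) {p : ℤ → ℝ} (hp0 : ∀ j, 0 ≤ p j)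
    (hpsum : Summable p) (hp1 : ∑' j, p j = 1) (hsymm : ∀ j, p (-j) = p j) {R : ℝ}
    (hψ : ∀ s : ℝ, |s| < R → Summable (fun j : ℤ => Real.exp (s * j) * p j))
    {t : ℝ} (ht : |t| < ((d : ℝ) + 1) * R) :
    Summable fun l : ℕ => (((d : ℝ) + 1) * (d : ℝ) ^ l) *
      Real.log (expSeries p (t / (((d : ℝ) + 1) * (d : ℝ) ^ l))) := by
  have hd' : (2 : ℝ) ≤ d := by exact_mod_cast hd
  have hlt := abs_div_lt_of_abs_lt (one_le_two.trans hd) ht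
  have hone : ∀ l, 1 ≤ expSeries p (t / (((d : ℝ) + 1) * (d : ℝ) ^ l)) := fun l =>
    one_le_expSeries hp0 hpsum hp1 hsymm (hψ _ (hlt l))
  have hgeom : Summable fun l : ℕ => ((d : ℝ)⁻¹) ^ l :=
    summable_geometric_of_lt_one (by positivity) (inv_lt_one_of_one_lt₀ (by linarith))
  refine Summable.of_nonneg_of_le
    (fun l => mul_nonneg (by positivity) (Real.log_nonneg (hone l))) (fun l => ?_)
    (hgeom.mul_left (((d : ℝ) + 1) * (expSeries p (t / ((d : ℝ) + 1)) - 1)))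
  have hs : |t / ((d : ℝ) + 1)| < R := by simpa using hlt 0
  have heq : t / (((d : ℝ) + 1) * (d : ℝ) ^ l) = ((d : ℝ)⁻¹) ^ l * (t / ((d : ℝ) + 1)) := by
    rw [inv_pow]; field_simp
  have ha : |((d : ℝ)⁻¹) ^ l| ≤ 1 := by
    rw [abs_of_nonneg (by positivity)]
    exact pow_le_one₀ (by positivity) (inv_le_one_of_one_le₀ (by linarith))
  have hle := expSeries_mul_sub_one_le hp0 hpsum hp1 hsymm ha (hψ _ hs)
    (hψ _ (heq ▸ hlt l))
  rw [← heq] at hle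
  calc _ ≤ (((d : ℝ) + 1) * (d : ℝ) ^ l) *
        ((((d : ℝ)⁻¹) ^ l) ^ 2 * (expSeries p (t / ((d : ℝ) + 1)) - 1)) := by
        gcongr
        exact (Real.log_le_sub_one_of_pos (one_pos.trans_le (hone l))).trans hle
    _ = _ := by
        have : (d : ℝ) ^ l * ((d : ℝ)⁻¹) ^ l = 1 := by
          rw [← mul_pow, mul_inv_cancel₀ (by positivity), one_pow]
        linear_combination (((d : ℝ) + 1) * (expSeries p (t / ((d : ℝ) + 1)) - 1)) *
          ((d : ℝ)⁻¹) ^ l * this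

lemma integrable_exp_and_mgf_eq_expSeries {Ω : Type*} [MeasurableSpace Ω] {P : Measure Ω}
    {p : ℤ → ℝ} (hp0 : ∀ j, 0 ≤ p j) {Y : Ω → ℤ} (hmeas : Measurable Y)
    (hlaw : ∀ j : ℤ, P {ω | Y ω = j} = ENNReal.ofReal (p j)) {s : ℝ}
    (hs : Summable fun j : ℤ => Real.exp (s * j) * p j) :
    Integrable (fun ω => Real.exp (s * Y ω)) P ∧
      mgf (fun ω => (Y ω : ℝ)) P s = expSeries p s := by
  have hmap : ∀ j : ℤ, P.map Y {j} = ENNReal.ofReal (p j) := fun j => by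
    rw [Measure.map_apply hmeas (measurableSet_singleton j), ← hlaw j]; rfl
  have hint : Integrable (fun j : ℤ => Real.exp (s * j)) (P.map Y) := by
    refine ⟨(measurable_of_countable _).aestronglyMeasurable, ?_⟩
    rw [hasFiniteIntegral_iff_ofReal (Eventually.of_forall fun j => (Real.exp_pos _).le),
      lintegral_countable']
    simp_rw [hmap, ← ENNReal.ofReal_mul (Real.exp_pos _).le]
    rw [← ENNReal.ofReal_tsum_of_nonneg (fun j => mul_nonneg (Real.exp_pos _).le (hp0 j)) hs]
    exact ENNReal.ofReal_lt_top
  refine ⟨hint.comp_measurable hmeas, ?_⟩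
  have h := integral_map (μ := P) hmeas.aemeasurable hint.1
  rw [mgf, ← h, integral_countable hint, expSeries]
  refine tsum_congr fun j => ?_
  rw [Measure.real, hmap, ENNReal.toReal_ofReal (hp0 j), smul_eq_mul, mul_comm]

lemma ofFn_vertex_injective (d n : ℕ) :
    Function.Injective fun x : Fin (d + 1) × (Fin n → Fin d) => ((x.1, List.ofFn x.2) : Vertex d) :=
  fun _ _ h => Prod.ext (Prod.ext_iff.1 h).1 (List.ofFn_injective (Prod.ext_iff.1 h).2)

lemma sum_sphereW (d n : ℕ) (f : Vertex d → ℝ) :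
    ∑ v ∈ sphereW d (n + 1), f v =
      ∑ x : Fin (d + 1) × (Fin n → Fin d), f (x.1, List.ofFn x.2) :=
  sum_image (ofFn_vertex_injective d n).injOn

lemma card_sphereW (d n : ℕ) : #(sphereW d (n + 1)) = (d + 1) * d ^ n := by
  rw [sphereW, card_image_of_injective _ (ofFn_vertex_injective d _)]
  simp

lemma length_of_mem_sphereW {d n : ℕ} {v : Vertex d} (hv : v ∈ sphereW d (n + 1)) :
    v.2.length = n := by
  obtain ⟨x, -, rfl⟩ := mem_image.1 hv
  simp

lemma sum_sphereW_succ (d n : ℕ) (f : Vertex d → ℝ) :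
    ∑ v ∈ sphereW d (n + 2), f v =
      ∑ v ∈ sphereW d (n + 1), ∑ a : Fin d, f (v.1, v.2 ++ [a]) := by
  rw [sum_sphereW, sum_sphereW, Fintype.sum_prod_type, Fintype.sum_prod_type]
  refine sum_congr rfl fun i _ => ?_
  rw [← (Fin.snocEquiv fun _ => Fin d).sum_comp, Fintype.sum_prod_type_right]
  refine sum_congr rfl fun x _ => sum_congr rfl fun a _ => ?_
  rw [List.ofFn_succ']
  simp [Fin.snocEquiv]

lemma heightAt_append {d : ℕ} {Ω : Type*} (Y : Vertex d → Ω → ℝ) (i : Fin (d + 1))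
    (x : List (Fin d)) (a : Fin d) (ω : Ω) :
    heightAt Y (i, x ++ [a]) ω = heightAt Y (i, x) ω + Y (i, x ++ [a]) ω := by
  simp only [heightAt, List.length_append, List.length_singleton]
  rw [sum_range_succ]
  congr 1
  · refine sum_congr rfl fun k hk => ?_
    rw [List.take_append_of_le_length (Nat.lt_succ_iff.1 (mem_range.1 hk))]
  · rw [List.take_of_length_le (by simp)]

lemma sphAvg_eq_sum {d : ℕ} (hd : 1 ≤ d) {Ω : Type*} (Y : Vertex d → Ω → ℝ) (n : ℕ) (ω : Ω) :
    sphAvg d Y (n + 1) ω = ∑ l ∈ range (n + 1), ∑ v ∈ sphereW d (l + 1),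
      (((d : ℝ) + 1) * (d : ℝ) ^ l)⁻¹ * Y v ω := by
  have hd' : (d : ℝ) ≠ 0 := by positivity
  induction n with
  | zero => simp [sphAvg, sum_sphereW, heightAt, mul_sum]
  | succ n ih =>
    rw [sum_range_succ, ← ih, ← mul_sum]
    simp only [sphAvg, Nat.add_sub_cancel]
    rw [sum_sphereW_succ, sum_sphereW_succ]
    simp only [heightAt_append, sum_add_distrib, sum_const, card_univ, Fintype.card_fin,
      nsmul_eq_mul, Prod.mk.eta]
    rw [← mul_sum]
    push_cast
    field_simp
    ring

/-- The ball of non-root vertices of depth at most `n`. -/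
def ballW (d n : ℕ) : Finset (Vertex d) := (range n).biUnion fun l => sphereW d (l + 1)

lemma pairwiseDisjoint_sphereW (d : ℕ) (s : Set ℕ) :
    s.PairwiseDisjoint fun l => sphereW d (l + 1) := fun _ _ _ _ hlm =>
  Finset.disjoint_left.2 fun _ hl hm =>
    hlm ((length_of_mem_sphereW hl).symm.trans (length_of_mem_sphereW hm))

lemma sphAvg_eq_sum_ballW {d : ℕ} (hd : 1 ≤ d) {Ω : Type*} (Y : Vertex d → Ω → ℝ) (n : ℕ) (ω : Ω) :
    sphAvg d Y (n + 1) ω = ∑ v ∈ ballW d (n + 1),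
      (((d : ℝ) + 1) * (d : ℝ) ^ v.2.length)⁻¹ * Y v ω := by
  rw [sphAvg_eq_sum hd, ballW, sum_biUnion (pairwiseDisjoint_sphereW d _)]
  refine sum_congr rfl fun l _ => sum_congr rfl fun v hv => ?_
  rw [length_of_mem_sphereW hv]

lemma integrable_exp_sphAvg_and_integral_eq {Ω : Type*} [MeasurableSpace Ω] {P : Measure Ω}
    [IsProbabilityMeasure P] {d : ℕ} (hd : 1 ≤ d) {p : ℤ → ℝ} (hp0 : ∀ j, 0 ≤ p j)
    (hpsum : Summable p) (hp1 : ∑' j, p j = 1) (hsymm : ∀ j, p (-j) = p j) {R : ℝ}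
    (hψ : ∀ s : ℝ, |s| < R → Summable (fun j : ℤ => Real.exp (s * j) * p j))
    {Y : Vertex d → Ω → ℤ} (hmeas : ∀ v, Measurable (Y v)) (hindep : iIndepFun Y P)
    (hlaw : ∀ v (j : ℤ), P {ω | Y v ω = j} = ENNReal.ofReal (p j))
    {t : ℝ} (ht : |t| < ((d : ℝ) + 1) * R) (n : ℕ) :
    Integrable (fun ω => Real.exp (t * sphAvg d (fun v ω => (Y v ω : ℝ)) (n + 1) ω)) P ∧
      ∫ ω, Real.exp (t * sphAvg d (fun v ω => (Y v ω : ℝ)) (n + 1) ω) ∂P =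
        Real.exp (∑ l ∈ range (n + 1), (((d : ℝ) + 1) * (d : ℝ) ^ l) *
          Real.log (expSeries p (t / (((d : ℝ) + 1) * (d : ℝ) ^ l)))) := by
  have hlt := abs_div_lt_of_abs_lt hd ht
  let X : Vertex d → Ω → ℝ := fun v ω => (((d : ℝ) + 1) * (d : ℝ) ^ v.2.length)⁻¹ * (Y v ω : ℝ)
  have hX : ∀ v, Measurable (X v) := fun v =>
    ((measurable_of_countable fun j : ℤ => (j : ℝ)).comp (hmeas v)).const_mul _
  have hXindep : iIndepFun X P :=
    hindep.comp (fun v (j : ℤ) => (((d : ℝ) + 1) * (d : ℝ) ^ v.2.length)⁻¹ * (j : ℝ))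
      fun v => measurable_of_countable _
  have hstep : ∀ v, Integrable (fun ω => Real.exp (t * X v ω)) P ∧
      mgf (X v) P t = expSeries p (t / (((d : ℝ) + 1) * (d : ℝ) ^ v.2.length)) := fun v => by
    have h := integrable_exp_and_mgf_eq_expSeries hp0 (hmeas v) (hlaw v) (hψ _ (hlt v.2.length))
    simpa only [X, mgf, div_eq_mul_inv, mul_assoc] using h
  have hsum : ∀ ω, sphAvg d (fun v ω => (Y v ω : ℝ)) (n + 1) ω
      = (∑ v ∈ ballW d (n + 1), X v) ω := fun ω => by
    rw [sphAvg_eq_sum_ballW hd, Finset.sum_apply]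
  simp_rw [hsum]
  refine ⟨hXindep.integrable_exp_mul_sum hX fun v _ => (hstep v).1, ?_⟩
  change mgf (∑ v ∈ ballW d (n + 1), X v) P t = _
  rw [hXindep.mgf_sum hX, ballW, prod_biUnion (pairwiseDisjoint_sphereW d _), Real.exp_sum]
  refine prod_congr rfl fun l _ => ?_
  rw [prod_congr rfl fun v hv => (hstep v).2.trans (by rw [length_of_mem_sphereW hv]),
    prod_const, card_sphereW, mul_comm _ (Real.log _), Real.exp_mul,
    Real.exp_log (one_pos.trans_le (one_le_expSeries hp0 hpsum hp1 hsymm (hψ _ (hlt l)))),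
    ← Real.rpow_natCast]
  push_cast
  rfl

/-- The moment generating function of the a.s. limit `H` of the spherical
averages of the free height field is finite on `(-(d+1)R, (d+1)R)` and is the limit of the
finite-volume mgfs; its logarithm is the absolutely convergent series
`Σ_{l≥0} (d+1)d^l log ψ(t/((d+1)d^l))`. -/
theorem free_limit_mgf
    {Ω : Type} [MeasurableSpace Ω] (P : Measure Ω) [IsProbabilityMeasure P]
    (d : ℕ) (hd : 2 ≤ d)
    (p : ℤ → ℝ) (hp0 : ∀ j, 0 ≤ p j) (hpsum : Summable p) (hp1 : ∑' j, p j = 1)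
    (hsymm : ∀ j, p (-j) = p j)
    (R : ℝ) (hR : 0 < R)
    (hψ : ∀ s : ℝ, |s| < R → Summable (fun j : ℤ => Real.exp (s * j) * p j))
    (Y : Vertex d → Ω → ℤ) (hmeas : ∀ v, Measurable (Y v))
    (hindep : iIndepFun Y P)
    (hlaw : ∀ v (j : ℤ), P {ω | Y v ω = j} = ENNReal.ofReal (p j))
    (H : Ω → ℝ) (hHmeas : Measurable H)
    (hH : ∀ᵐ ω ∂P, Tendsto (fun r => sphAvg d (fun v ω => (Y v ω : ℝ)) r ω) atTop (𝓝 (H ω))) :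
    ∀ t : ℝ, |t| < ((d : ℝ) + 1) * R →
      Integrable (fun ω => Real.exp (t * H ω)) P ∧
      Tendsto (fun r => ∫ ω, Real.exp (t * sphAvg d (fun v ω => (Y v ω : ℝ)) r ω) ∂P)
        atTop (𝓝 (∫ ω, Real.exp (t * H ω) ∂P)) ∧
      Summable (fun l : ℕ =>
        |(((d : ℝ) + 1) * (d : ℝ) ^ l) *
          Real.log (∑' j : ℤ, Real.exp ((t / (((d : ℝ) + 1) * (d : ℝ) ^ l)) * j) * p j)|) ∧
      Real.log (∫ ω, Real.exp (t * H ω) ∂P) =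
        ∑' l : ℕ, (((d : ℝ) + 1) * (d : ℝ) ^ l) *
          Real.log (∑' j : ℤ, Real.exp ((t / (((d : ℝ) + 1) * (d : ℝ) ^ l)) * j) * p j) := by
  intro t ht
  have hd1 : 1 ≤ d := one_le_two.trans hd
  have hsum : ∀ s : ℝ, |s| < ((d : ℝ) + 1) * R → Summable fun l : ℕ =>
      (((d : ℝ) + 1) * (d : ℝ) ^ l) *
        Real.log (expSeries p (s / (((d : ℝ) + 1) * (d : ℝ) ^ l))) := fun s hs =>
    summable_log_expSeries hd hp0 hpsum hp1 hsymm hψ hs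
  have hmgf : ∀ s : ℝ, |s| < ((d : ℝ) + 1) * R → ∀ n, _ := fun s hs n =>
    integrable_exp_sphAvg_and_integral_eq hd1 hp0 hpsum hp1 hsymm hψ hmeas hindep hlaw hs n
  obtain ⟨q, hqt, hq⟩ : ∃ q : ℝ, |q * t| < ((d : ℝ) + 1) * R ∧ 1 < q := by
    have hcont : Tendsto (fun q : ℝ => |q * t|) (𝓝[>] 1) (𝓝 |1 * t|) :=
      ((continuous_id.mul continuous_const).abs.tendsto 1).mono_left nhdsWithin_le_nhds
    rw [one_mul] at hcont
    exact ((hcont.eventually (gt_mem_nhds ht)).and self_mem_nhdsWithin).exists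
  have hnonneg : ∀ l : ℕ, 0 ≤ (((d : ℝ) + 1) * (d : ℝ) ^ l) *
      Real.log (expSeries p (q * t / (((d : ℝ) + 1) * (d : ℝ) ^ l))) := fun l =>
    mul_nonneg (by positivity) <| Real.log_nonneg <| one_le_expSeries hp0 hpsum hp1 hsymm <|
      hψ _ (abs_div_lt_of_abs_lt hd1 hqt l)
  have hmeasH : ∀ n, Measurable (sphAvg d (fun v ω => (Y v ω : ℝ)) n) := fun n => by
    have hY : ∀ v, Measurable fun ω => (Y v ω : ℝ) := fun v =>
      (measurable_of_countable fun j : ℤ => (j : ℝ)).comp (hmeas v)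
    exact (Finset.measurable_sum _ fun v _ => Finset.measurable_sum _ fun k _ => hY _).const_mul _
  obtain ⟨hint, hlim⟩ := tendsto_integral_exp_of_bounded P
    (U := fun n ω => t * sphAvg d (fun v ω => (Y v ω : ℝ)) (n + 1) ω) (V := fun ω => t * H ω) hq
    (fun n => (hmeasH (n + 1)).const_mul t)
    (fun n => by simpa only [mul_assoc] using (hmgf _ hqt n).1)
    (fun n => by
      have h := (hmgf _ hqt n).2.trans_le
        (Real.exp_le_exp.2 ((hsum _ hqt).sum_le_tsum _ fun l _ => hnonneg l))
      simpa only [mul_assoc] using h)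
    (by
      filter_upwards [hH] with ω hω
      exact ((tendsto_add_atTop_iff_nat 1).2 hω).const_mul t)
  have hexp : ∫ ω, Real.exp (t * H ω) ∂P = Real.exp (∑' l : ℕ, (((d : ℝ) + 1) * (d : ℝ) ^ l) *
      Real.log (expSeries p (t / (((d : ℝ) + 1) * (d : ℝ) ^ l)))) := by
    refine tendsto_nhds_unique hlim ?_
    simp_rw [fun n => (hmgf t ht n).2]
    exact (Real.continuous_exp.tendsto _).comp
      ((tendsto_add_atTop_iff_nat 1).2 (hsum t ht).hasSum.tendsto_sum_nat)
  exact ⟨hint, (tendsto_add_atTop_iff_nat 1).1 hlim, (hsum t ht).abs, by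
    rw [hexp, Real.log_exp]; rfl⟩
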